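/- arXiv:2206.00561 — 3 statements merged into one kernel-verified Lean document; each statement's English description precedes it below -/
import Mathlib

section
/- Fix an integer k ≥ 1 and a finite color set C with |C| ≥ 3k − 1. Let G be a minimally C-inextensible graph with a good template T = (S, c, F). Then every vertex u ∈ S has more than k neighbors in V(G)∖S. -/
open Finset

variable {V : Type*}

/-- A proper `C`-coloring of `G`: every vertex gets a color in `C` and adjacent
vertices get different colors. -/
def ProperColoring (G : SimpleGraph V) (C : Finset ℕ) (f : V → ℕ) : Prop :=
  (∀ v, f v ∈ C) ∧ ∀ ⦃u v⦄, G.Adj u v → f u ≠ f v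

/-- A proper `C`-coloring `f` of `G` respects the template `(S, c, F)` if it agrees
with `c` on `S` and avoids the forbidden list `F v` at each `v ∉ S`. -/
def Respects (G : SimpleGraph V) (C : Finset ℕ) (S : Finset V)
    (c : V → ℕ) (F : V → Finset ℕ) (f : V → ℕ) : Prop :=
  ProperColoring G C f ∧ (∀ v ∈ S, f v = c v) ∧ ∀ v ∉ S, f v ∉ F v

/-- `(S, c, F)` is a `C`-template on `G` (with `c` a proper `C`-coloring of `G[S]` and
`F v ⊆ C` for `v ∉ S`) witnessing the `C`-inextensibility of `G`:
its `k`-cost `k|S| + Σ_{v∉S}|F(v)|` is less than `2k²`, `|F(v)| ≤ k` for all `v ∉ S`,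
and no proper `C`-coloring of `G` respects it. -/
def Witnesses [Fintype V] [DecidableEq V] (k : ℕ) (G : SimpleGraph V) (C : Finset ℕ)
    (S : Finset V) (c : V → ℕ) (F : V → Finset ℕ) : Prop :=
  (∀ v ∈ S, c v ∈ C) ∧ (∀ u ∈ S, ∀ v ∈ S, G.Adj u v → c u ≠ c v) ∧
  (∀ v ∉ S, F v ⊆ C) ∧
  k * S.card + ∑ v ∈ Sᶜ, (F v).card < 2 * k ^ 2 ∧
  (∀ v ∉ S, (F v).card ≤ k) ∧
  ¬ ∃ f : V → ℕ, Respects G C S c F f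

/-- `G` is `C`-inextensible if some `C`-template witnesses its inextensibility. -/
def Inextensible [Fintype V] [DecidableEq V] (k : ℕ) (G : SimpleGraph V)
    (C : Finset ℕ) : Prop :=
  ∃ S c F, Witnesses k G C S c F

/-- `G` is minimally `C`-inextensible: it is `C`-inextensible but every proper induced
subgraph is `C`-extensible. -/
def MinInextensible [Fintype V] [DecidableEq V] (k : ℕ) (G : SimpleGraph V)
    (C : Finset ℕ) : Prop :=
  Inextensible k G C ∧ ∀ A : Finset V, A ≠ Finset.univ →
    ¬ Inextensible k (SimpleGraph.induce (↑A : Set V) G) C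

/-!
Suppose `u ∈ S` has at most `k` neighbors outside `S`. Delete `u` and forbid the color `c u` at each
of these neighbors. Deleting `u` lowers the cost by `k` and the new forbidden colors raise it by at
most `k`; a good template leaves room for one more forbidden color at every vertex. A coloring of
`G - u` respecting the new template extends by `c u` to one of `G` respecting the old template, so
the new template shows that `G - u` is inextensible, contradicting minimality.
-/

section Cost

/-- The `k`-cost of a template with precolored set `S` and forbidden lists `F`. -/
def templateCost [Fintype V] [DecidableEq V] (k : ℕ) (S : Finset V) (F : V → Finset ℕ) : ℕ :=
  k * #S + ∑ v ∈ Sᶜ, #(F v)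

theorem templateCost_induce [Fintype V] [DecidableEq V] (k : ℕ) (S : Finset V)
    (F : V → Finset ℕ) (s : Set V) [Fintype s] [DecidablePred (· ∈ s)] :
    templateCost k (S.subtype (· ∈ s)) (fun x : s => F x) =
      k * #{v ∈ S | v ∈ s} + ∑ v ∈ Sᶜ with v ∈ s, #(F v) := by
  have hcompl : (S.subtype (· ∈ s))ᶜ = Sᶜ.subtype (· ∈ s) := by
    ext x
    simp only [mem_compl, mem_subtype]
  rw [templateCost, hcompl, card_subtype, sum_subtype_eq_sum_filter (fun v => #(F v))]

theorem templateCost_induce_compl_singleton_add [Fintype V] [DecidableEq V] (k : ℕ) {S : Finset V}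
    (F : V → Finset ℕ) {u : V} (hu : u ∈ S) :
    templateCost k (S.subtype (· ∈ (({u}ᶜ : Finset V) : Set V)))
        (fun x : (({u}ᶜ : Finset V) : Set V) => F x) + k =
      templateCost k S F := by
  have hS : {v ∈ S | v ∈ (({u}ᶜ : Finset V) : Set V)} = S.erase u := by
    ext v
    simp [and_comm]
  have hSc : {v ∈ Sᶜ | v ∈ (({u}ᶜ : Finset V) : Set V)} = Sᶜ :=
    filter_true_of_mem fun v hv => by
      simpa using ne_of_mem_of_not_mem hu (mem_compl.1 hv) |>.symm
  rw [templateCost_induce, hS, hSc, templateCost, ← card_erase_add_one hu]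
  ring

end Cost

section ForbidAtNeighbors

variable (G : SimpleGraph V) [DecidableRel G.Adj] (u : V) (a : ℕ) (F : V → Finset ℕ)

/-- The forbidden lists `F` with the color `a` added at every neighbor of `u`: the lists needed on
`G - u` once `u` has color `a`. -/
def forbidAtNeighbors (v : V) : Finset ℕ :=
  if G.Adj u v then insert a (F v) else F v

variable {G u} in
theorem forbidAtNeighbors_of_adj {v : V} (h : G.Adj u v) :
    forbidAtNeighbors G u a F v = insert a (F v) :=
  if_pos h

variable {G u} in
theorem forbidAtNeighbors_of_not_adj {v : V} (h : ¬G.Adj u v) :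
    forbidAtNeighbors G u a F v = F v :=
  if_neg h

theorem subset_forbidAtNeighbors (v : V) : F v ⊆ forbidAtNeighbors G u a F v := by
  by_cases h : G.Adj u v
  · exact forbidAtNeighbors_of_adj a F h ▸ subset_insert a (F v)
  · exact (forbidAtNeighbors_of_not_adj a F h).superset

theorem forbidAtNeighbors_subset {C : Finset ℕ} {v : V} (ha : a ∈ C) (hF : F v ⊆ C) :
    forbidAtNeighbors G u a F v ⊆ C := by
  by_cases h : G.Adj u v
  · exact forbidAtNeighbors_of_adj a F h ▸ insert_subset ha hF
  · exact forbidAtNeighbors_of_not_adj a F h ▸ hF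

theorem card_forbidAtNeighbors_le (v : V) :
    #(forbidAtNeighbors G u a F v) ≤ #(F v) + if G.Adj u v then 1 else 0 := by
  by_cases h : G.Adj u v
  · simpa only [forbidAtNeighbors_of_adj a F h, if_pos h] using card_insert_le a (F v)
  · simp only [forbidAtNeighbors_of_not_adj a F h, if_neg h, add_zero, le_refl]

theorem templateCost_forbidAtNeighbors_le [Fintype V] [DecidableEq V] (k : ℕ) (S : Finset V) :
    templateCost k S (forbidAtNeighbors G u a F) ≤
      templateCost k S F + #{v ∈ Sᶜ | G.Adj u v} := by
  rw [templateCost, templateCost, card_filter, add_assoc, ← sum_add_distrib]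
  gcongr with v
  exact card_forbidAtNeighbors_le G u a F v

end ForbidAtNeighbors

theorem Respects.extend {G : SimpleGraph V} {C : Finset ℕ} {S : Finset V} {c : V → ℕ}
    {F F' : V → Finset ℕ} {s : Set V} [DecidablePred (· ∈ s)] {f : s → ℕ}
    (hf : Respects (G.induce s) C (S.subtype (· ∈ s)) (fun x => c x) (fun x => F' x) f)
    (hcC : ∀ v ∈ S, c v ∈ C) (hc : ∀ v ∈ S, ∀ w ∈ S, G.Adj v w → c v ≠ c w)
    (hs : ∀ v ∉ s, v ∈ S) (hF : ∀ v ∉ S, F v ⊆ F' v)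
    (hF' : ∀ v ∉ s, ∀ w ∉ S, G.Adj v w → c v ∈ F' w) :
    Respects G C S c F (Function.extend Subtype.val f c) := by
  obtain ⟨⟨hfC, hfadj⟩, hfS, hfF⟩ := hf
  set g : V → ℕ := Function.extend Subtype.val f c
  have g_in (x : s) : g x = f x := Subtype.val_injective.extend_apply f c x
  have g_out {v : V} (hv : v ∉ s) : g v = c v :=
    Function.extend_apply' f c v fun ⟨x, hx⟩ => hv (hx ▸ x.2)
  have g_eq {v : V} (hv : v ∈ S) : g v = c v := by
    by_cases hvs : v ∈ s
    · exact (g_in ⟨v, hvs⟩).trans (hfS ⟨v, hvs⟩ (mem_subtype.2 hv))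
    · exact g_out hvs
  have g_avoids {v : V} (hv : v ∉ S) : g v ∉ F' v := by
    have hvs : v ∈ s := not_imp_comm.1 (hs v) hv
    exact g_in ⟨v, hvs⟩ ▸ hfF ⟨v, hvs⟩ (mem_subtype.not.2 hv)
  have g_ne_of_notMem {v w : V} (hvs : v ∉ s) (hvw : G.Adj v w) : g v ≠ g w := by
    rw [g_out hvs]
    by_cases hw : w ∈ S
    · exact g_eq hw ▸ hc v (hs v hvs) w hw hvw
    · exact ne_of_mem_of_not_mem (hF' v hvs w hw hvw) (g_avoids hw)
  refine ⟨⟨fun v => ?_, fun v w hvw => ?_⟩, fun v => g_eq, fun v hv => mt (hF v hv ·) (g_avoids hv)⟩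
  · by_cases hvs : v ∈ s
    · exact g_in ⟨v, hvs⟩ ▸ hfC ⟨v, hvs⟩
    · exact g_out hvs ▸ hcC v (hs v hvs)
  · by_cases hvs : v ∈ s
    · by_cases hws : w ∈ s
      · rw [g_in ⟨v, hvs⟩, g_in ⟨w, hws⟩]
        exact hfadj hvw
      · exact (g_ne_of_notMem hws hvw.symm).symm
    · exact g_ne_of_notMem hvs hvw

section VertexDeletion

variable [Fintype V] [DecidableEq V] {k : ℕ} {G : SimpleGraph V} [DecidableRel G.Adj]
  {C : Finset ℕ} {S : Finset V} {c : V → ℕ} {F : V → Finset ℕ} {u : V}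

theorem Witnesses.induce_compl_singleton (hT : Witnesses k G C S c F) (hu : u ∈ S)
    (hF : ∀ v ∉ S, G.Adj u v → #(F v) < k) (hdeg : #{v ∈ Sᶜ | G.Adj u v} ≤ k) :
    Witnesses k (G.induce (({u}ᶜ : Finset V) : Set V)) C
      (S.subtype (· ∈ (({u}ᶜ : Finset V) : Set V)))
      (fun x => c x) (fun x => forbidAtNeighbors G u (c u) F x) := by
  obtain ⟨hcC, hc, hFC, (hcost : templateCost k S F < 2 * k ^ 2), hFk, hno⟩ := hT
  refine ⟨fun x hx => hcC x (mem_subtype.1 hx),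
    fun x hx y hy hxy => hc x (mem_subtype.1 hx) y (mem_subtype.1 hy) hxy,
    fun x hx => forbidAtNeighbors_subset G u (c u) F (hcC u hu) (hFC x (mem_subtype.not.1 hx)),
    ?_, fun x hx => ?_, fun ⟨f, hf⟩ => hno ⟨_, hf.extend hcC hc ?_ ?_ ?_⟩⟩
  · change templateCost k _ _ < _
    have hdelete := templateCost_induce_compl_singleton_add k (forbidAtNeighbors G u (c u) F) hu
    have hforbid := templateCost_forbidAtNeighbors_le G u (c u) F k S
    omega
  · have hxS : (x : V) ∉ S := mem_subtype.not.1 hx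
    have hcard := card_forbidAtNeighbors_le G u (c u) F x
    refine hcard.trans ?_
    split_ifs with h
    · exact hF x hxS h
    · exact hFk x hxS
  · intro v hv
    obtain rfl : v = u := by simpa using hv
    exact hu
  · exact fun v _ => subset_forbidAtNeighbors G u (c u) F v
  · intro v hv w _ hvw
    obtain rfl : v = u := by simpa using hv
    exact forbidAtNeighbors_of_adj _ _ hvw ▸ mem_insert_self _ _

theorem precolored_vertex_many_neighbors_general (hT : Witnesses k G C S c F) (hu : u ∈ S)
    (hF : ∀ v ∉ S, G.Adj u v → #(F v) < k)
    (hext : ¬Inextensible k (G.induce (({u}ᶜ : Finset V) : Set V)) C) :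
    k < #{v ∈ Sᶜ | G.Adj u v} := by
  by_contra! hdeg
  exact hext ⟨_, _, _, hT.induce_compl_singleton hu hF hdeg⟩

end VertexDeletion

/-- If `|C| ≥ 3k − 1`, `G` is minimally `C`-inextensible with good template `(S, c, F)`,
then every vertex `u ∈ S` has more than `k` neighbors in `V(G) ∖ S`. -/
theorem precolored_vertex_many_neighbors [Fintype V] [DecidableEq V]
    (k : ℕ) (hk : 1 ≤ k) (G : SimpleGraph V) [DecidableRel G.Adj] (C : Finset ℕ)
    (hC : 3 * k - 1 ≤ C.card) (hmin : MinInextensible k G C)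
    (S : Finset V) (c : V → ℕ) (F : V → Finset ℕ)
    (hT : Witnesses k G C S c F) (hgood : ∀ v ∉ S, (F v).card ≤ k - 1) :
    ∀ u ∈ S, k < (Sᶜ.filter (fun v => G.Adj u v)).card := by
  intro u hu
  exact precolored_vertex_many_neighbors_general hT hu
    (fun v hv _ => (hgood v hv).trans_lt (Nat.sub_one_lt_of_lt hk))
    (hmin.2 {u}ᶜ ((compl_ne_univ_iff_nonempty _).2 (singleton_nonempty u)))
end

section
/- Fix an integer k ≥ 1 and a finite color set C with |C| ≥ (3 + 1/16)k − 1. If G is C-inextensible, then χ(G) ≥ |C| − 2k + 3. -/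
open Finset

variable {V : Type*}

/-!
Partition `V` by a `t`-coloring of `G` with `t ≤ |C| - 2k + 2`, and color the vertices off `S` with
the at least `|C| - |S|` colors not used on `S`, never using a color on two classes. With
`r = 2k - |S|`, the lists off `S` have total size below `kr`. As long as placing some color on some
class lowers the total list size by at least `k`, do so; this happens fewer than `r` times. Once no
such color is left, choose for every class a color that few of its vertices forbid, and make every
vertex forbidding that color a part of its own. There are then at most as many parts as colors,
every color lies on few lists and every part has small total list size, so Hall's theorem gives the
parts distinct colors.

If `c` is injective on `S`, this count misses by exactly one class. Either the color of some `u ∈ S`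
is free on the whole class of `u`, which then needs no further color, or each of the `|S|` colors
used on `S` lies on some list off `S`; being unavailable there anyway, it can be dropped from the
lists, and the `|S|` thereby gained make up for the missing class.
-/

section Classwise

variable {ι α : Type*}

/-- The vertices of `Q` can be colored from `N`, avoiding `F v` at every `v`, with no color shared
by two classes of `cl`. Equivalently, the complete multipartite graph on `Q` with parts the classes
of `cl` is list-colorable; the color classes of any graph are colored properly in this way. -/
def ClasswiseColorable (N : Finset α) (Q : Finset V) (F : V → Finset α) (cl : V → ι) : Prop :=
  ∃ f : V → α, (∀ v ∈ Q, f v ∈ N ∧ f v ∉ F v) ∧ ∀ u ∈ Q, ∀ v ∈ Q, f u = f v → cl u = cl v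

theorem ClasswiseColorable.of_refinement {κ : Type*} {N : Finset α} {Q : Finset V}
    {F : V → Finset α} {part : V → κ} {cl : V → ι} (h : ClasswiseColorable N Q F part)
    (hpart : ∀ u ∈ Q, ∀ v ∈ Q, part u = part v → cl u = cl v) : ClasswiseColorable N Q F cl := by
  obtain ⟨f, hf, hfpart⟩ := h
  exact ⟨f, hf, fun u hu v hv huv => hpart u hu v hv (hfpart u hu v hv huv)⟩

section DecidableColors

variable [DecidableEq α]

theorem ClasswiseColorable.of_sdiff {N X : Finset α} {Q : Finset V} {F : V → Finset α}
    {cl : V → ι} (hNX : Disjoint N X) (h : ClasswiseColorable N Q (fun v => F v \ X) cl) :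
    ClasswiseColorable N Q F cl := by
  obtain ⟨f, hf, hcl⟩ := h
  refine ⟨f, fun v hv => ⟨(hf v hv).1, fun hfF => (hf v hv).2 ?_⟩, hcl⟩
  exact mem_sdiff.2 ⟨hfF, disjoint_left.1 hNX (hf v hv).1⟩

theorem mul_card_le_sum_card {Q : Finset V} {F : V → Finset α} {Y : Finset α} {m : ℕ}
    (h : ∀ γ ∈ Y, m ≤ #{v ∈ Q | γ ∈ F v}) : #Y * m ≤ ∑ v ∈ Q, #(F v) :=
  calc #Y * m ≤ ∑ γ ∈ Y, #{v ∈ Q | γ ∈ F v} := card_nsmul_le_sum Y _ m h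
    _ = ∑ v ∈ Q, #{γ ∈ Y | γ ∈ F v} :=
      sum_card_bipartiteAbove_eq_sum_card_bipartiteBelow fun γ v => γ ∈ F v
    _ ≤ ∑ v ∈ Q, #(F v) :=
      sum_le_sum fun _ _ => card_le_card fun _ hγ => (mem_filter.1 hγ).2

theorem exists_card_mul_card_filter_mem_le {N : Finset α} (hN : N.Nonempty) (Q : Finset V)
    (F : V → Finset α) : ∃ γ ∈ N, #N * #{v ∈ Q | γ ∈ F v} ≤ ∑ v ∈ Q, #(F v) := by
  obtain ⟨γ, hγ, hmin⟩ := exists_min_image N (fun γ => #{v ∈ Q | γ ∈ F v}) hN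
  exact ⟨γ, hγ, mul_card_le_sum_card hmin⟩

theorem sum_card_sdiff_add_card_le {Q : Finset V} {F : V → Finset α} {X : Finset α}
    (hX : X ⊆ Q.biUnion F) : ∑ v ∈ Q, #(F v \ X) + #X ≤ ∑ v ∈ Q, #(F v) := by
  have hcover : X ⊆ Q.biUnion fun v => F v ∩ X := by
    rw [← biUnion_inter]
    exact subset_inter hX Subset.rfl
  calc ∑ v ∈ Q, #(F v \ X) + #X
      ≤ ∑ v ∈ Q, #(F v \ X) + ∑ v ∈ Q, #(F v ∩ X) :=
        Nat.add_le_add_left ((card_le_card hcover).trans card_biUnion_le) _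
    _ = ∑ v ∈ Q, #(F v) := by simp_rw [← sum_add_distrib, card_sdiff_add_card_inter]

theorem exists_card_mul_card_filter_class_mem_le {N : Finset α} (hN : N.Nonempty) (Q : Finset V)
    (F : V → Finset α) (cl : V → ι) :
    ∃ g : ι → α, (∀ i, g i ∈ N) ∧ #N * #{v ∈ Q | g (cl v) ∈ F v} ≤ ∑ v ∈ Q, #(F v) := by
  classical
  choose g hgN hg using fun i => exists_card_mul_card_filter_mem_le hN {v ∈ Q | cl v = i} F
  have hcl : ∀ v ∈ Q, cl v ∈ Q.image cl := fun v hv => mem_image_of_mem cl hv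
  refine ⟨g, hgN, ?_⟩
  rw [card_eq_sum_card_fiberwise (f := cl) fun v hv => hcl v (mem_filter.1 hv).1, mul_sum,
    ← sum_fiberwise_of_maps_to hcl]
  refine sum_le_sum fun i _ => (Nat.mul_le_mul_left _ (card_le_card ?_)).trans (hg i)
  grind

/-- The refinement of the partition into classes of `cl` in which every vertex whose list contains
the color `g i` chosen for its class `i` becomes a part of its own. -/
def splitClass (g : ι → α) (F : V → Finset α) (cl : V → ι) (v : V) : V ⊕ ι :=
  if g (cl v) ∈ F v then Sum.inl v else Sum.inr (cl v)

theorem eq_of_splitClass_eq {g : ι → α} {F : V → Finset α} {cl : V → ι} {u v : V}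
    (h : splitClass g F cl u = splitClass g F cl v) : cl u = cl v := by
  grind [splitClass]

variable [DecidableEq ι]

/-- The colors of `N` available to class `i` of `cl` as a whole, i.e. on no list of a vertex of `Q`
in that class. -/
def allowedColors (N : Finset α) (Q : Finset V) (F : V → Finset α) (cl : V → ι) (i : ι) :
    Finset α :=
  {γ ∈ N | ∀ v ∈ Q, cl v = i → γ ∉ F v}

theorem card_le_card_biUnion_allowedColors {N : Finset α} {Q : Finset V} {F : V → Finset α}
    {cl : V → ι} {D : ℕ} (hclasses : #(Q.image cl) ≤ #N)
    (hcolor : ∀ γ ∈ N, #{v ∈ Q | γ ∈ F v} < D)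
    (hclass : ∀ v ∈ Q, ∑ w ∈ Q with cl w = cl v, #(F w) < D)
    (hD : ∑ v ∈ Q, #(F v) + D * D ≤ D * (#N + 1)) {s : Finset ι} (hs : s ⊆ Q.image cl) :
    #s ≤ #(s.biUnion (allowedColors N Q F cl)) := by
  by_contra! hlt
  have hUN : s.biUnion (allowedColors N Q F cl) ⊆ N := biUnion_subset.2 fun _ _ => filter_subset _ _
  set Y := N \ s.biUnion (allowedColors N Q F cl)
  have hY : #Y + #(s.biUnion (allowedColors N Q F cl)) = #N := card_sdiff_add_card_eq_card hUN
  have hblocked : ∀ γ ∈ Y, ∀ i ∈ s, ∃ v ∈ Q, cl v = i ∧ γ ∈ F v := by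
    intro γ hγ i hi
    by_contra! hfree
    obtain ⟨hγN, hγU⟩ := mem_sdiff.1 hγ
    exact hγU (mem_biUnion.2 ⟨i, hi, mem_filter.2 ⟨hγN, hfree⟩⟩)
  have hsY : ∀ γ ∈ Y, #s ≤ #{v ∈ Q | γ ∈ F v} := by
    refine fun γ hγ => (card_le_card fun i hi => ?_).trans (card_image_le (f := cl))
    obtain ⟨v, hv, hvi, hγv⟩ := hblocked γ hγ i hi
    exact mem_image.2 ⟨v, mem_filter.2 ⟨hv, hγv⟩, hvi⟩
  have hsN : #s ≤ #N := (card_le_card hs).trans hclasses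
  obtain ⟨γ, hγ⟩ : Y.Nonempty := card_pos.1 (by omega)
  obtain ⟨i, hi⟩ : s.Nonempty := card_pos.1 (by omega)
  have hsD : #s < D := (hsY γ hγ).trans_lt (hcolor γ (mem_sdiff.1 hγ).1)
  have hYD : #Y < D := by
    obtain ⟨v, hv, rfl⟩ := mem_image.1 (hs hi)
    have hsub : Y ⊆ {w ∈ Q | cl w = cl v}.biUnion F := fun δ hδ => by
      obtain ⟨w, hw, hwv, hδw⟩ := hblocked δ hδ _ hi
      exact mem_biUnion.2 ⟨w, mem_filter.2 ⟨hw, hwv⟩, hδw⟩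
    exact ((card_le_card hsub).trans card_biUnion_le).trans_lt (hclass v hv)
  have hprod : #Y * #s ≤ ∑ v ∈ Q, #(F v) := mul_card_le_sum_card hsY
  have hrearrange : #Y * D + D * #s < #Y * #s + D * D := mul_add_mul_lt_mul_add_mul hYD hsD
  have hsum : D * (#N + 1) ≤ D * (#Y + #s) := Nat.mul_le_mul_left D (by omega)
  linarith

theorem classwiseColorable_of_forall_lt [Nonempty α] {N : Finset α} {Q : Finset V}
    {F : V → Finset α} {cl : V → ι} {D : ℕ} (hclasses : #(Q.image cl) ≤ #N)
    (hcolor : ∀ γ ∈ N, #{v ∈ Q | γ ∈ F v} < D)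
    (hclass : ∀ v ∈ Q, ∑ w ∈ Q with cl w = cl v, #(F w) < D)
    (hD : ∑ v ∈ Q, #(F v) + D * D ≤ D * (#N + 1)) : ClasswiseColorable N Q F cl := by
  obtain ⟨φ, hφinj, hφ⟩ := (all_card_le_biUnion_card_iff_exists_injective
    fun i : Q.image cl => allowedColors N Q F cl i).1 fun s => by
      have hs : s.image Subtype.val ⊆ Q.image cl := image_subset_iff.2 fun i _ => i.2
      have hhall := card_le_card_biUnion_allowedColors hclasses hcolor hclass hD hs
      rwa [card_image_of_injective s Subtype.val_injective, image_biUnion] at hhall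
  let ψ : ι → α := Function.extend Subtype.val φ fun _ => Classical.arbitrary α
  have hψ (v : V) (hv : v ∈ Q) : ψ (cl v) = φ ⟨cl v, mem_image_of_mem cl hv⟩ :=
    Subtype.val_injective.extend_apply φ _ ⟨cl v, mem_image_of_mem cl hv⟩
  refine ⟨fun v => ψ (cl v), fun v hv => ?_, fun u hu v hv huv => ?_⟩
  · obtain ⟨hN, hF⟩ := mem_filter.1 (hφ ⟨cl v, mem_image_of_mem cl hv⟩)
    simp only [hψ v hv]
    exact ⟨hN, hF v hv rfl⟩
  · simp only [hψ u hu, hψ v hv] at huv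
    exact congrArg Subtype.val (hφinj huv)

/-- The amount by which the total list size on `Q` drops when the color `γ` is given to the vertices
of class `i` whose list does not contain it, and is then removed from all other lists. -/
def colorGain (Q : Finset V) (F : V → Finset α) (cl : V → ι) (i : ι) (γ : α) : ℕ :=
  ∑ v ∈ Q with cl v = i ∧ γ ∉ F v, #(F v) + #{v ∈ Q | γ ∈ F v}

theorem sum_card_erase_add_colorGain (Q : Finset V) (F : V → Finset α) (cl : V → ι) (i : ι)
    (γ : α) :
    ∑ v ∈ Q with ¬(cl v = i ∧ γ ∉ F v), #((F v).erase γ) + colorGain Q F cl i γ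
      = ∑ v ∈ Q, #(F v) := by
  have hfilter : {v ∈ Q | γ ∈ F v} = {v ∈ {v ∈ Q | ¬(cl v = i ∧ γ ∉ F v)} | γ ∈ F v} := by
    grind
  have herase : ∑ v ∈ Q with ¬(cl v = i ∧ γ ∉ F v), #((F v).erase γ) + #{v ∈ Q | γ ∈ F v}
      = ∑ v ∈ Q with ¬(cl v = i ∧ γ ∉ F v), #(F v) := by
    rw [hfilter, card_filter, ← sum_add_distrib]
    refine sum_congr rfl fun v _ => ?_
    split_ifs with hγ
    · exact card_erase_add_one hγ
    · rw [erase_eq_of_notMem hγ, add_zero]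
  rw [colorGain, ← sum_filter_add_sum_filter_not Q (fun v => cl v = i ∧ γ ∉ F v), ← herase]
  ring

theorem ClasswiseColorable.of_erase {N : Finset α} {Q : Finset V} {F : V → Finset α}
    {cl : V → ι} {i : ι} {γ : α} (hγ : γ ∈ N)
    (h : ClasswiseColorable (N.erase γ) {v ∈ Q | ¬(cl v = i ∧ γ ∉ F v)}
      (fun v => (F v).erase γ) cl) :
    ClasswiseColorable N Q F cl := by
  obtain ⟨f, hf, hcl⟩ := h
  simp only [mem_filter, mem_erase] at hf hcl
  exact ⟨fun v => if cl v = i ∧ γ ∉ F v then γ else f v, by grind, by grind⟩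

theorem card_image_splitClass_le [DecidableEq V] (g : ι → α) (F : V → Finset α) (cl : V → ι)
    (Q : Finset V) :
    #(Q.image (splitClass g F cl)) ≤ #{v ∈ Q | g (cl v) ∈ F v} + #(Q.image cl) := by
  have hsub : Q.image (splitClass g F cl) ⊆ {v ∈ Q | g (cl v) ∈ F v}.disjSum (Q.image cl) := by
    refine image_subset_iff.2 fun v hv => ?_
    by_cases hg : g (cl v) ∈ F v
    · simp [splitClass, hg, hv]
    · simpa [splitClass, hg] using ⟨v, hv, rfl⟩
  exact (card_le_card hsub).trans_eq (card_disjSum _ _)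

theorem exists_sum_splitClass_le_colorGain [DecidableEq V] {N : Finset α} {Q : Finset V}
    {F : V → Finset α} {g : ι → α} (cl : V → ι) {v : V} (hg : g (cl v) ∈ N)
    (hF : #(F v) < #N) :
    ∃ γ ∈ N, ∑ w ∈ Q with splitClass g F cl w = splitClass g F cl v, #(F w)
      ≤ colorGain Q F cl (cl v) γ := by
  by_cases hgv : g (cl v) ∈ F v
  · obtain ⟨γ, hγN, hγF⟩ := exists_mem_notMem_of_card_lt_card hF
    refine ⟨γ, hγN, (sum_le_sum_of_subset ?_).trans (Nat.le_add_right _ _)⟩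
    grind [splitClass]
  · refine ⟨g (cl v), hg, (sum_le_sum_of_subset ?_).trans (Nat.le_add_right _ _)⟩
    grind [splitClass]

theorem classwiseColorable_of_colorGain_lt {N : Finset α} {Q : Finset V} {F : V → Finset α}
    {cl : V → ι} {D : ℕ} (hF : ∀ v ∈ Q, #(F v) < #N)
    (hgain : ∀ i, ∀ γ ∈ N, colorGain Q F cl i γ < D)
    (hclasses : ∑ v ∈ Q, #(F v) + #N * #(Q.image cl) < #N * (#N + 1))
    (hD : ∑ v ∈ Q, #(F v) + D * D ≤ D * (#N + 1)) : ClasswiseColorable N Q F cl := by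
  classical
  have hN : N.Nonempty := card_pos.1 (Nat.pos_of_mul_pos_right (Nat.zero_lt_of_lt hclasses))
  have : Nonempty α := ⟨hN.choose⟩
  rcases Q.eq_empty_or_nonempty with rfl | ⟨v, -⟩
  · exact ⟨fun _ => hN.choose, by simp, by simp⟩
  obtain ⟨g, hgN, hg⟩ := exists_card_mul_card_filter_class_mem_le hN Q F cl
  have hparts : #(Q.image (splitClass g F cl)) ≤ #N := by
    refine (card_image_splitClass_le g F cl Q).trans (Nat.le_of_lt_add_one ?_)
    refine Nat.lt_of_mul_lt_mul_left (a := #N) ?_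
    rw [mul_add]
    omega
  refine ClasswiseColorable.of_refinement (part := splitClass g F cl)
    (classwiseColorable_of_forall_lt hparts
      (fun γ hγ => (Nat.le_add_left _ _).trans_lt (hgain (cl v) γ hγ))
      (fun w hw => ?_) hD)
    fun u _ v _ => eq_of_splitClass_eq
  obtain ⟨γ, hγN, hγ⟩ := exists_sum_splitClass_le_colorGain cl (hgN (cl w)) (hF w hw)
  exact hγ.trans_lt (hgain (cl w) γ hγN)

end DecidableColors

theorem classwiseColorable_of_sum_card_lt [DecidableEq ι] {N : Finset α} {Q : Finset V}
    {F : V → Finset α} {cl : V → ι} {k r : ℕ} (hF : ∀ v ∈ Q, #(F v) ≤ k)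
    (hsum : ∑ v ∈ Q, #(F v) < k * r)
    (hN : k + r ≤ #N + 1) (hclasses : #(Q.image cl) + r ≤ #N + 1) :
    ClasswiseColorable N Q F cl := by
  classical
  induction r generalizing N Q F with
  | zero => simp at hsum
  | succ r ih =>
    by_cases! hgain : ∃ i, ∃ γ ∈ N, k ≤ colorGain Q F cl i γ
    · obtain ⟨i, γ, hγ, hk⟩ := hgain
      have hdrop := sum_card_erase_add_colorGain Q F cl i γ
      have hcard := card_erase_add_one hγ
      have himage := card_le_card
        (image_subset_image (f := cl) (filter_subset (fun v => ¬(cl v = i ∧ γ ∉ F v)) Q))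
      rw [mul_add_one] at hsum
      exact .of_erase (i := i) hγ (ih (fun v hv => card_erase_le.trans (hF v (mem_filter.1 hv).1))
        (by omega) (by omega) (by omega))
    · have hkN : k ≤ #N := by omega
      refine classwiseColorable_of_colorGain_lt (fun v hv => ?_) hgain ?_ ?_
      · have hv_le : #(F v) ≤ ∑ w ∈ Q, #(F w) :=
          single_le_sum (f := fun w => #(F w)) (fun _ _ => Nat.zero_le _) hv
        rcases r.eq_zero_or_pos with rfl | hr
        · omega
        · have := hF v hv
          omega
      · calc ∑ v ∈ Q, #(F v) + #N * #(Q.image cl)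
            < #N * (r + 1) + #N * #(Q.image cl) :=
              Nat.add_lt_add_right (hsum.trans_le (Nat.mul_le_mul_right _ hkN)) _
          _ = #N * (#(Q.image cl) + (r + 1)) := by ring
          _ ≤ #N * (#N + 1) := Nat.mul_le_mul_left _ hclasses
      · calc ∑ v ∈ Q, #(F v) + k * k ≤ k * (r + 1) + k * k := Nat.add_le_add_right hsum.le _
          _ = k * (k + (r + 1)) := by ring
          _ ≤ k * (#N + 1) := Nat.mul_le_mul_left _ hN

theorem classwiseColorable_of_sum_card_add_lt [DecidableEq ι] {N : Finset α} {Q : Finset V}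
    {F : V → Finset α} {cl : V → ι} {k r : ℕ} (hF : ∀ v ∈ Q, #(F v) ≤ k)
    (hsum : ∑ v ∈ Q, #(F v) < k * r)
    (hsum_add : ∑ v ∈ Q, #(F v) + 2 * k < (k + 1) * r) (hN : k + r ≤ #N + 1)
    (hclasses : #(Q.image cl) + r ≤ #N + 2) : ClasswiseColorable N Q F cl := by
  classical
  obtain ⟨r, rfl⟩ : ∃ q, r = q + 1 := Nat.exists_eq_succ_of_ne_zero (by rintro rfl; simp at hsum)
  by_cases hsmall : ∑ v ∈ Q, #(F v) < k * r
  · exact classwiseColorable_of_sum_card_lt hF hsmall (by omega) (by omega)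
  have hkr : k ≤ r := by linarith
  have hk : 0 < k := Nat.pos_of_mul_pos_right (Nat.zero_lt_of_lt hsum)
  obtain ⟨r, rfl⟩ : ∃ q, r = q + 1 := Nat.exists_eq_succ_of_ne_zero (by omega)
  by_cases! hgain : ∃ i, ∃ γ ∈ N, ∑ v ∈ Q, #(F v) < k * r + colorGain Q F cl i γ
  · obtain ⟨i, γ, hγ, hlt⟩ := hgain
    have hdrop := sum_card_erase_add_colorGain Q F cl i γ
    have hcard := card_erase_add_one hγ
    have himage := card_le_card
      (image_subset_image (f := cl) (filter_subset (fun v => ¬(cl v = i ∧ γ ∉ F v)) Q))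
    exact .of_erase (i := i) hγ (classwiseColorable_of_sum_card_lt (k := k) (r := r)
      (fun v hv => card_erase_le.trans (hF v (mem_filter.1 hv).1))
      (by omega) (by omega) (by omega))
  · refine classwiseColorable_of_colorGain_lt (D := r + 2) (fun v hv => ?_)
      (fun i γ hγ => ?_) ?_ ?_
    · have := hF v hv
      omega
    · have := hgain i γ hγ
      linarith
    · have hsumN : ∑ v ∈ Q, #(F v) < #N * (r + 1) := by nlinarith
      calc ∑ v ∈ Q, #(F v) + #N * #(Q.image cl)
          < #N * (r + 1) + #N * #(Q.image cl) := Nat.add_lt_add_right hsumN _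
        _ = #N * (#(Q.image cl) + (r + 1)) := by ring
        _ ≤ #N * (#N + 1) := Nat.mul_le_mul_left _ (by omega)
    · calc ∑ v ∈ Q, #(F v) + (r + 2) * (r + 2)
          ≤ k * (r + 2) + (r + 2) * (r + 2) := Nat.add_le_add_right hsum.le _
        _ = (r + 2) * (k + (r + 2)) := by ring
        _ ≤ (r + 2) * (#N + 1) := Nat.mul_le_mul_left _ hN

end Classwise

/-- The coloring `c` of a template `(S, c, F)`: a proper `C`-coloring of `G[S]`, given as a function
on all of `V` whose values off `S` are ignored. -/
def ProperColoringOn (G : SimpleGraph V) (C : Finset ℕ) (S : Finset V) (c : V → ℕ) : Prop :=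
  (∀ v ∈ S, c v ∈ C) ∧ ∀ u ∈ S, ∀ v ∈ S, G.Adj u v → c u ≠ c v

section Template

variable {ι : Type*} [Fintype V] [DecidableEq V] {G : SimpleGraph V} {C : Finset ℕ}
  {S : Finset V} {c : V → ℕ} {F : V → Finset ℕ}

theorem ProperColoringOn.exists_respects (hc : ProperColoringOn G C S c) (col : G.Coloring ι)
    (h : ClasswiseColorable (C \ S.image c) Sᶜ F col) : ∃ f, Respects G C S c F f := by
  obtain ⟨f, hf, hcl⟩ := h
  simp only [mem_compl, mem_sdiff] at hf hcl
  have hne : ∀ u ∈ S, ∀ v ∉ S, c u ≠ f v := fun u hu v hv huv =>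
    (hf v hv).1.2 (huv ▸ mem_image_of_mem c hu)
  refine ⟨S.piecewise c f, ⟨fun v => ?_, fun u v huv => ?_⟩, fun v hv => ?_, fun v hv => ?_⟩
  · by_cases hv : v ∈ S
    · simpa [hv] using hc.1 v hv
    · simpa [hv] using (hf v hv).1.1
  · by_cases hu : u ∈ S <;> by_cases hv : v ∈ S
    · simpa [hu, hv] using hc.2 u hu v hv huv
    · simpa [hu, hv] using hne u hu v hv
    · simpa [hu, hv] using (hne v hv u hu).symm
    · simpa [hu, hv] using fun he => col.valid huv (hcl u hu v hv he)
  · simp [hv]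
  · simpa [hv] using (hf v hv).2

theorem ProperColoringOn.piecewise_class [DecidableEq ι] (hc : ProperColoringOn G C S c)
    (col : G.Coloring ι) (hinj : Set.InjOn c S) {u : V} (hu : u ∈ S) :
    ProperColoringOn G C {v | v ∈ S ∨ col v = col u} (S.piecewise c fun _ => c u) := by
  have hcol {v : V} (hv : v ∈ ({v | v ∈ S ∨ col v = col u} : Finset V)) (hvS : v ∉ S) :
      col v = col u := by
    simpa [hvS] using hv
  refine ⟨fun v _ => ?_, fun x hx y hy hxy => ?_⟩
  · by_cases hv : v ∈ S
    · simpa [hv] using hc.1 v hv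
    · simpa [hv] using hc.1 u hu
  · by_cases hxS : x ∈ S <;> by_cases hyS : y ∈ S
    · simpa [hxS, hyS] using hc.2 x hxS y hyS hxy
    · simpa [hxS, hyS] using
        fun he => col.valid hxy (hinj hxS hu he ▸ (hcol hy hyS).symm)
    · simpa [hxS, hyS] using
        fun he => col.valid hxy (hinj hu hyS he ▸ hcol hx hxS)
    · exact absurd ((hcol hx hxS).trans (hcol hy hyS).symm) (col.valid hxy)

theorem ProperColoringOn.exists_respects_of_forall_notMem [DecidableEq ι]
    (hc : ProperColoringOn G C S c) (col : G.Coloring ι) (hinj : Set.InjOn c S) {u : V} (hu : u ∈ S)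
    (hfree : ∀ v ∉ S, col v = col u → c u ∉ F v)
    (h : ClasswiseColorable (C \ S.image c) {v ∈ Sᶜ | col v ≠ col u} F col) :
    ∃ f, Respects G C S c F f := by
  set R : Finset V := {v | v ∈ S ∨ col v = col u}
  set g : V → ℕ := S.piecewise c fun _ => c u
  have hgS : ∀ v ∈ S, g v = c v := fun v hv => piecewise_eq_of_mem _ _ _ hv
  have hgu : ∀ v ∉ S, g v = c u := fun v hv => piecewise_eq_of_notMem _ _ _ hv
  have himage : R.image g = S.image c := by
    refine Subset.antisymm (image_subset_iff.2 fun v _ => ?_) (image_subset_iff.2 fun v hv => ?_)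
    · by_cases hv : v ∈ S
      · exact mem_image.2 ⟨v, hv, (hgS v hv).symm⟩
      · exact mem_image.2 ⟨u, hu, (hgu v hv).symm⟩
    · exact mem_image.2 ⟨v, by simp [R, hv], hgS v hv⟩
  have hR : Rᶜ = {v ∈ Sᶜ | col v ≠ col u} := by
    ext v
    simp [R]
  obtain ⟨f, hf, hfR, hfF⟩ :=
    (hc.piecewise_class col hinj hu).exists_respects col (F := F) (by rwa [himage, hR])
  refine ⟨f, hf, fun v hv => ?_, fun v hv => ?_⟩
  · exact (hfR v (by simp [hv])).trans (hgS v hv)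
  · by_cases hvu : col v = col u
    · rw [(hfR v (by simp [hvu])).trans (hgu v hv)]
      exact hfree v hv hvu
    · exact hfF v (by simp [hv, hvu])

theorem exists_add_eq_and_lt_mul {k s b : ℕ} (h : k * s + b < 2 * k ^ 2) :
    ∃ r, s + r = 2 * k ∧ b < k * r := by
  have hs : s ≤ 2 * k := by
    by_contra! hlt
    nlinarith
  obtain ⟨r, hr⟩ := Nat.exists_eq_add_of_le hs
  exact ⟨r, hr.symm, by nlinarith⟩

theorem ProperColoringOn.exists_respects_of_cost_lt [Fintype ι] {k : ℕ}
    (hc : ProperColoringOn G C S c) (col : G.Coloring ι) (hF : ∀ v ∉ S, #(F v) ≤ k)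
    (hcost : k * #S + ∑ v ∈ Sᶜ, #(F v) < 2 * k ^ 2) (hC : 3 * k ≤ #C + 1)
    (hι : Fintype.card ι + 2 * k ≤ #C + 2) : ∃ f, Respects G C S c F f := by
  classical
  obtain ⟨r, hr, hsum⟩ := exists_add_eq_and_lt_mul hcost
  have hN : #(C \ S.image c) + #(S.image c) = #C :=
    card_sdiff_add_card_eq_card (image_subset_iff.2 hc.1)
  have hFS : ∀ v ∈ Sᶜ, #(F v) ≤ k := fun v hv => hF v (mem_compl.1 hv)
  have hclasses : #(Sᶜ.image col) ≤ Fintype.card ι := card_le_univ _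
  have himage : #(S.image c) ≤ #S := card_image_le
  by_cases hinj : Set.InjOn c S
  swap
  · have hne : #(S.image c) ≠ #S := fun h => hinj (card_image_iff.1 h)
    exact hc.exists_respects col
      (classwiseColorable_of_sum_card_lt hFS hsum (by omega) (by omega))
  have hcard : #(S.image c) = #S := card_image_of_injOn hinj
  by_cases! hfree : ∃ u ∈ S, ∀ v ∉ S, col v = col u → c u ∉ F v
  · obtain ⟨u, hu, hfree⟩ := hfree
    have hsub : {v ∈ Sᶜ | col v ≠ col u} ⊆ Sᶜ := filter_subset _ _
    have hremaining : #({v ∈ Sᶜ | col v ≠ col u}.image col) < Fintype.card ι :=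
      card_lt_univ_of_notMem (x := col u) (by simp)
    exact hc.exists_respects_of_forall_notMem col hinj hu hfree
      (classwiseColorable_of_sum_card_lt (fun v hv => hFS v (hsub hv))
        ((sum_le_sum_of_subset hsub).trans_lt hsum) (by omega) (by omega))
  · have hcover : S.image c ⊆ Sᶜ.biUnion F := image_subset_iff.2 fun u hu => by
      obtain ⟨v, hv, -, hvF⟩ := hfree u hu
      exact mem_biUnion.2 ⟨v, mem_compl.2 hv, hvF⟩
    have hdrop := sum_card_sdiff_add_card_le hcover
    exact hc.exists_respects col (.of_sdiff sdiff_disjoint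
      (classwiseColorable_of_sum_card_add_lt (k := k) (r := r)
        (fun v hv => (card_le_card sdiff_subset).trans (hFS v hv))
        (by omega) (by rw [add_one_mul]; omega) (by omega) (by omega)))

end Template

theorem inextensible_chromatic_general [Fintype V] [DecidableEq V] (k : ℕ) (G : SimpleGraph V)
    (C : Finset ℕ) (hC : 3 * k ≤ C.card + 1) (h : Inextensible k G C) :
    ((C.card : ℕ∞)) + 3 ≤ G.chromaticNumber + ((2 * k : ℕ) : ℕ∞) := by
  obtain ⟨S, c, F, hcC, hcne, -, hcost, hF, hno⟩ := h
  by_contra! hlow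
  obtain ⟨t, ht⟩ : ∃ t : ℕ, G.chromaticNumber = t :=
    ENat.ne_top_iff_exists.1 (by rintro htop; simp [htop] at hlow) |>.imp fun _ => Eq.symm
  obtain ⟨col⟩ : G.Colorable t := SimpleGraph.chromaticNumber_le_iff_colorable.1 ht.le
  have htC : t + 2 * k < #C + 3 := by
    rw [ht] at hlow
    exact_mod_cast hlow
  have hc : ProperColoringOn G C S c := ⟨hcC, hcne⟩
  exact hno (hc.exists_respects_of_cost_lt col hF hcost hC (by rw [Fintype.card_fin]; omega))

/-- If `|C| ≥ (3 + 1/16)k − 1` (i.e. `49k ≤ 16|C| + 16`) and `G` is `C`-inextensible,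
then `χ(G) ≥ |C| − 2k + 3` (stated without truncated subtraction as
`|C| + 3 ≤ χ(G) + 2k`). -/
theorem inextensible_chromatic [Fintype V] [DecidableEq V] (k : ℕ) (hk : 1 ≤ k)
    (G : SimpleGraph V) (C : Finset ℕ) (hC : 49 * k ≤ 16 * C.card + 16)
    (h : Inextensible k G C) :
    ((C.card : ℕ∞)) + 3 ≤ G.chromaticNumber + ((2 * k : ℕ) : ℕ∞) :=
  inextensible_chromatic_general k G C (by omega) h
end

section
/- For every integer k ≥ 1, every graph G with chromatic number χ(G) ≥ 4k − 1 contains a (k+1)-connected subgraph with more than χ(G) − k vertices and chromatic number at least χ(G) − 2k + 1. -/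
variable {V : Type*}

/-- `G` is `n`-connected: it has more than `n` vertices and no cutset of fewer than `n`
vertices. -/
def KConnected (G : SimpleGraph V) (n : ℕ) : Prop :=
  n < Nat.card V ∧ ∀ X : Set V, X.ncard < n →
    ¬ ∃ A B : Set V, A.Nonempty ∧ B.Nonempty ∧ Disjoint A B ∧ A ∪ B = Xᶜ ∧
        ∀ a ∈ A, ∀ b ∈ B, ¬ G.Adj a b

/-!
Write `p = n - 2k`. If every `(k+1)`-connected induced subgraph on more than `p + k` vertices is
`p`-colourable, then `G` is `(n-1)`-colourable. To make this survive splitting along a cutset, one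
solves a more general problem with `n - 1` colours: some vertices are precoloured and the others
have forbidden colours, at most `k` each, where a precoloured vertex weighs `k`, a forbidden colour
weighs `1`, and the total weight is less than `2k²`.

In a minimal counterexample no vertex forbids `k` colours, since colouring it would keep the weight;
every precoloured vertex has more than `k` uncoloured neighbours, since otherwise its colour could
be forbidden at these instead; and every uncoloured vertex has so large a degree that there are more
than `p + k` vertices. If the graph is `(k+1)`-connected, its `p`-colouring is refined to one
avoiding the forbidden colours. Otherwise a cutset of at most `k` vertices leaves a side of weight
less than `k²`: colour everything outside that side first, and then that side with the cutset
precoloured.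
-/

section ListRefinement

open Finset

variable {γ ι : Type*} {F : V → Finset γ} {cls : V → ι} {W : Finset V} {Q : Finset γ}

/-- `g` colours the vertices of `W` from the palette `Q`, avoiding the forbidden colours `F v` at
each vertex `v`, and every colour class of `g` lies inside a single class of the partition of `W`
given by the fibres of `cls`. -/
structure IsListRefinement (F : V → Finset γ) (cls : V → ι) (W : Finset V) (Q : Finset γ)
    (g : V → γ) : Prop where
  mem_palette : ∀ v ∈ W, g v ∈ Q
  notMem_forbidden : ∀ v ∈ W, g v ∉ F v
  cls_eq : ∀ u ∈ W, ∀ v ∈ W, g u = g v → cls u = cls v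

theorem IsListRefinement.piecewise [DecidableEq V] [DecidableEq γ] {T : Finset V} {P : Finset γ}
    {f g : V → γ} (hP : P ⊆ Q) (hf : IsListRefinement F cls T P f)
    (hg : IsListRefinement F cls (W \ T) (Q \ P) g) :
    IsListRefinement F cls W Q (T.piecewise f g) where
  mem_palette v hv := by
    by_cases hT : v ∈ T
    · rw [piecewise_eq_of_mem _ _ _ hT]
      exact hP (hf.mem_palette v hT)
    · rw [piecewise_eq_of_notMem _ _ _ hT]
      exact (mem_sdiff.1 (hg.mem_palette v (mem_sdiff.2 ⟨hv, hT⟩))).1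
  notMem_forbidden v hv := by
    by_cases hT : v ∈ T
    · rw [piecewise_eq_of_mem _ _ _ hT]
      exact hf.notMem_forbidden v hT
    · rw [piecewise_eq_of_notMem _ _ _ hT]
      exact hg.notMem_forbidden v (mem_sdiff.2 ⟨hv, hT⟩)
  cls_eq u hu v hv huv := by
    have separated : ∀ x ∈ T, ∀ y ∈ W \ T, f x ≠ g y := fun x hx y hy hxy =>
      (mem_sdiff.1 (hg.mem_palette y hy)).2 (hxy ▸ hf.mem_palette x hx)
    by_cases huT : u ∈ T <;> by_cases hvT : v ∈ T <;>
      simp only [piecewise_eq_of_mem, piecewise_eq_of_notMem, huT, hvT, not_false_eq_true] at huv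
    · exact hf.cls_eq u huT v hvT huv
    · exact absurd huv (separated u huT v (mem_sdiff.2 ⟨hv, hvT⟩))
    · exact absurd huv.symm (separated v hvT u (mem_sdiff.2 ⟨hu, huT⟩))
    · exact hg.cls_eq u (mem_sdiff.2 ⟨hu, huT⟩) v (mem_sdiff.2 ⟨hv, hvT⟩) huv

theorem exists_isListRefinement_of_single_class [DecidableEq γ] {α : γ} (hα : α ∈ Q)
    (hF : ∀ v ∈ W, #(F v) < #Q) (hcls : ∀ u ∈ W, ∀ v ∈ W, cls u = cls v) :
    ∃ P ⊆ Q, #P ≤ #{v ∈ W | α ∈ F v} + 1 ∧ ∃ g, IsListRefinement F cls W P g := by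
  have : Nonempty γ := ⟨α⟩
  choose! c hcQ hcF using fun v hv => exists_mem_notMem_of_card_lt_card (hF v hv)
  refine ⟨insert α ({v ∈ W | α ∈ F v}.image c), ?_, ?_,
    fun v => if α ∈ F v then c v else α, fun v hv => ?_, fun v hv => ?_,
    fun u hu v hv _ => hcls u hu v hv⟩
  · refine insert_subset hα (image_subset_iff.2 fun v hv => hcQ v (mem_filter.1 hv).1)
  · exact (card_insert_le _ _).trans (Nat.add_le_add_right card_image_le 1)
  · split_ifs with h
    · exact mem_insert_of_mem (mem_image_of_mem c (mem_filter.2 ⟨hv, h⟩))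
    · exact mem_insert_self _ _
  · split_ifs with h
    · exact hcF v hv
    · exact h

theorem exists_sum_le_card_image_mul_sum_fiber [DecidableEq ι] (hW : W.Nonempty) (f : V → ℕ)
    (cls : V → ι) :
    ∃ w ∈ W, ∑ v ∈ W, f v ≤ #(W.image cls) * ∑ v ∈ W with cls v = cls w, f v := by
  obtain ⟨i, hi, hmax⟩ := exists_max_image (W.image cls) (fun i => ∑ v ∈ W with cls v = i, f v)
    (hW.image cls)
  obtain ⟨w, hw, rfl⟩ := mem_image.1 hi
  refine ⟨w, hw, ?_⟩
  rw [← sum_fiberwise_of_maps_to fun v hv => mem_image_of_mem cls hv]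
  simpa only [smul_eq_mul] using sum_le_card_nsmul _ _ _ hmax

theorem exists_card_mul_card_filter_mem_le_sum_card [DecidableEq γ] (hQ : Q.Nonempty)
    (F : V → Finset γ) (W : Finset V) :
    ∃ α ∈ Q, #Q * #{v ∈ W | α ∈ F v} ≤ ∑ v ∈ W, #(F v) := by
  obtain ⟨α, hα, hmin⟩ := exists_min_image Q (fun a => #{v ∈ W | a ∈ F v}) hQ
  refine ⟨α, hα, ?_⟩
  calc #Q * #{v ∈ W | α ∈ F v}
      ≤ ∑ a ∈ Q, #{v ∈ W | a ∈ F v} := by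
        simpa only [smul_eq_mul] using card_nsmul_le_sum Q _ _ hmin
    _ = ∑ v ∈ W, #{a ∈ Q | a ∈ F v} :=
        sum_card_bipartiteAbove_eq_sum_card_bipartiteBelow fun a v => a ∈ F v
    _ ≤ ∑ v ∈ W, #(F v) :=
        sum_le_sum fun v _ => card_le_card fun _ ha => (mem_filter.1 ha).2

theorem exists_add_eq_and_lt_mul_of_heavy {q e Y R L : ℕ} (hY : Y + R ≤ (q + 1) * Y)
    (hL : (q + 1 + e) * L ≤ Y) (h : Y + R < (e + 1) * (q + 1)) :
    ∃ d, L + d = e ∧ (0 < q → R < (d + 1) * q) := by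
  have hLe : L ≤ e := by
    by_contra! hlt
    have : (q + 1 + e) * (e + 1) ≤ (q + 1 + e) * L := Nat.mul_le_mul_left _ hlt
    nlinarith
  obtain ⟨d, rfl⟩ := Nat.exists_eq_add_of_le hLe
  refine ⟨d, rfl, fun hq => ?_⟩
  rcases L.eq_zero_or_pos with rfl | hLpos
  · by_contra! hR
    nlinarith
  · nlinarith

theorem card_image_sdiff_fiber_lt [DecidableEq V] [DecidableEq ι] (cls : V → ι) {w : V}
    (hw : w ∈ W) : #((W \ {v ∈ W | cls v = cls w}).image cls) < #(W.image cls) := by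
  refine card_lt_card (ssubset_iff_of_subset (image_subset_image sdiff_subset) |>.2
    ⟨cls w, mem_image_of_mem cls hw, fun h => ?_⟩)
  obtain ⟨v, hv, hvw⟩ := mem_image.1 h
  obtain ⟨hvW, hvT⟩ := mem_sdiff.1 hv
  exact hvT (mem_filter.2 ⟨hvW, hvw⟩)

/-- The numerical condition under which list refinements are built: `W` meets at most `p` classes,
the palette `Q` has `e` colours to spare beyond one per class, no vertex forbids more than `p`
colours, and fewer than `(e + 1) * p` colours are forbidden in total. -/
structure IsWithinBudget [DecidableEq ι] (F : V → Finset γ) (cls : V → ι) (W : Finset V)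
    (Q : Finset γ) (p e : ℕ) : Prop where
  card_image_le : #(W.image cls) ≤ p
  le_card_palette : p + e ≤ #Q
  card_forbidden_le : ∀ v ∈ W, #(F v) ≤ p
  sum_lt : ∑ v ∈ W, #(F v) < (e + 1) * p

namespace IsWithinBudget

variable [DecidableEq ι] {p e : ℕ}

theorem exists_sdiff_singleton [DecidableEq V] [DecidableEq γ]
    (h : IsWithinBudget F cls W Q p e) {v : V} (hv : v ∈ W)
    (hvp : #(F v) = p) :
    ∃ α ∈ Q, α ∉ F v ∧ ∃ d, IsWithinBudget F cls (W \ {v}) (Q \ {α}) p d := by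
  have hsum := h.sum_lt
  have hQ := h.le_card_palette
  have hsplit := sum_sdiff (f := fun v => #(F v)) (singleton_subset_iff.2 hv)
  rw [sum_singleton, hvp] at hsplit
  obtain ⟨d, rfl⟩ : ∃ d, e = d + 1 := Nat.exists_eq_add_one_of_ne_zero (by rintro rfl; omega)
  obtain ⟨α, hαQ, hαF⟩ := exists_mem_notMem_of_card_lt_card (s := F v) (t := Q) (by omega)
  have hcard := card_sdiff_add_card_eq_card (singleton_subset_iff.2 hαQ)
  rw [card_singleton] at hcard
  exact ⟨α, hαQ, hαF, d, (card_le_card (image_subset_image sdiff_subset)).trans h.card_image_le,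
    by omega, fun u hu => h.card_forbidden_le u (sdiff_subset hu), by linarith⟩

/- The class with the largest total number of forbidden colours gets the colour `α` it forbids
least often, except at the few vertices forbidding `α`. -/
theorem exists_sdiff_of_card_lt [DecidableEq V] [DecidableEq γ]
    (h : IsWithinBudget F cls W Q p e) (hW : W.Nonempty) (hF : ∀ v ∈ W, #(F v) < p) :
    ∃ T ⊆ W, T.Nonempty ∧ ∃ P ⊆ Q, (∃ f, IsListRefinement F cls T P f) ∧
      ((W \ T).Nonempty → ∃ q d, IsWithinBudget F cls (W \ T) (Q \ P) q d) := by
  have hp : p ≠ 0 := (Nat.pos_of_mul_pos_left (Nat.zero_lt_of_lt h.sum_lt)).ne'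
  obtain ⟨q, rfl⟩ := Nat.exists_eq_add_one_of_ne_zero hp
  have hQ := h.le_card_palette
  obtain ⟨w, hw, hheavy⟩ := exists_sum_le_card_image_mul_sum_fiber hW (fun v => #(F v)) cls
  have hcls := (card_image_sdiff_fiber_lt cls hw).trans_le h.card_image_le
  have hne : {v ∈ W | cls v = cls w}.Nonempty := ⟨w, mem_filter.2 ⟨hw, rfl⟩⟩
  have hconst : ∀ u ∈ {v ∈ W | cls v = cls w}, ∀ v ∈ {v ∈ W | cls v = cls w}, cls u = cls v :=
    fun u hu v hv => (mem_filter.1 hu).2.trans (mem_filter.1 hv).2.symm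
  have hTW : {v ∈ W | cls v = cls w} ⊆ W := filter_subset _ _
  generalize {v ∈ W | cls v = cls w} = T at *
  obtain ⟨α, hα, hrare⟩ :=
    exists_card_mul_card_filter_mem_le_sum_card (Q := Q) (card_pos.1 (by omega)) F T
  obtain ⟨P, hPQ, hP, hf⟩ := exists_isListRefinement_of_single_class hα
    (fun v hv => (hF v (hTW hv)).trans_le (by omega)) hconst
  have hsplit := (add_comm _ _).trans (sum_sdiff (f := fun v => #(F v)) hTW)
  obtain ⟨d, rfl, hrest⟩ := exists_add_eq_and_lt_mul_of_heavy
    (hsplit.trans_le (hheavy.trans (Nat.mul_le_mul_right _ h.card_image_le)))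
    ((Nat.mul_le_mul_right _ hQ).trans hrare) (hsplit.trans_lt h.sum_lt)
  have hcard := card_sdiff_add_card_eq_card hPQ
  exact ⟨T, hTW, hne, P, hPQ, hf, fun hrestne => ⟨q, d, Nat.le_of_lt_succ hcls, by omega,
    fun v hv => Nat.le_of_lt_succ (hF v (sdiff_subset hv)),
    hrest ((hrestne.image cls).card_pos.trans_le (Nat.le_of_lt_succ hcls))⟩⟩

theorem exists_isListRefinement (h : IsWithinBudget F cls W Q p e) :
    ∃ g, IsListRefinement F cls W Q g := by
  classical
  induction W using Finset.strongInduction generalizing Q p e with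
  | H W ih =>
  rcases W.eq_empty_or_nonempty with rfl | hW
  · have hp := Nat.pos_of_mul_pos_left (Nat.zero_lt_of_lt h.sum_lt)
    obtain ⟨α, -⟩ := card_pos.1 (hp.trans_le ((Nat.le_add_right _ _).trans h.le_card_palette))
    exact ⟨fun _ => α, by simp, by simp, by simp⟩
  by_cases hfull : ∃ v ∈ W, #(F v) = p
  · obtain ⟨v, hv, hvp⟩ := hfull
    obtain ⟨α, hαQ, hαF, d, hd⟩ := h.exists_sdiff_singleton hv hvp
    have hf : IsListRefinement F cls {v} {α} fun _ => α :=
      ⟨by simp, by simpa using hαF, by simp⟩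
    obtain ⟨g, hg⟩ := ih _ (sdiff_ssubset (singleton_subset_iff.2 hv) (singleton_nonempty v)) hd
    exact ⟨_, hf.piecewise (singleton_subset_iff.2 hαQ) hg⟩
  · push Not at hfull
    obtain ⟨T, hTW, hT, P, hPQ, ⟨f, hf⟩, hrest⟩ := h.exists_sdiff_of_card_lt hW
      fun v hv => (h.card_forbidden_le v hv).lt_of_ne (hfull v hv)
    rcases (W \ T).eq_empty_or_nonempty with hempty | hne
    · exact ⟨_, hf.piecewise hPQ (g := f) (by constructor <;> simp [hempty])⟩
    · obtain ⟨q, d, hd⟩ := hrest hne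
      obtain ⟨g, hg⟩ := ih _ (sdiff_ssubset hTW hT) hd
      exact ⟨_, hf.piecewise hPQ hg⟩

end IsWithinBudget

end ListRefinement

section Separation

open Finset

/-- `S` separates `A` from `B` in the subgraph of `G` induced by `s`: the three sets partition `s`,
both sides are nonempty, and no edge joins them. -/
structure IsSeparation [DecidableEq V] (G : SimpleGraph V) (s S A B : Finset V) : Prop where
  union_eq : S ∪ (A ∪ B) = s
  disjoint_left : Disjoint S A
  disjoint_right : Disjoint S B
  disjoint_sides : Disjoint A B
  left_nonempty : A.Nonempty
  right_nonempty : B.Nonempty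
  not_adj : ∀ a ∈ A, ∀ b ∈ B, ¬ G.Adj a b

namespace IsSeparation

variable [DecidableEq V] {G : SimpleGraph V} {s S A B : Finset V}

theorem symm (h : IsSeparation G s S A B) : IsSeparation G s S B A where
  union_eq := by rw [union_comm B A, h.union_eq]
  disjoint_left := h.disjoint_right
  disjoint_right := h.disjoint_left
  disjoint_sides := h.disjoint_sides.symm
  left_nonempty := h.right_nonempty
  right_nonempty := h.left_nonempty
  not_adj b hb a ha hba := h.not_adj a ha b hb hba.symm

theorem mem_iff (h : IsSeparation G s S A B) {v : V} : v ∈ s ↔ v ∈ S ∨ v ∈ A ∨ v ∈ B := by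
  rw [← h.union_eq, mem_union, mem_union]

theorem mem_or_mem_of_adj (h : IsSeparation G s S A B) {u v : V} (hu : u ∈ B) (hv : v ∈ s)
    (huv : G.Adj u v) : v ∈ S ∨ v ∈ B :=
  (h.mem_iff.1 hv).imp_right fun hAB => hAB.resolve_left fun hA => h.not_adj v hA u hu huv.symm

theorem exists_mem_right_of_card_lt [DecidableRel G.Adj] {U X : Finset V}
    (h : IsSeparation G (U ∪ X) S A B) (hX : ∀ x ∈ X, #S < #{v ∈ U | G.Adj x v}) :
    ∃ v ∈ U, v ∈ B := by
  obtain ⟨b, hb⟩ := h.right_nonempty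
  rcases mem_union.1 (h.mem_iff.2 (.inr (.inr hb))) with hbU | hbX
  · exact ⟨b, hbU, hb⟩
  · obtain ⟨v, hv, hvS⟩ := exists_mem_notMem_of_card_lt_card (hX b hbX)
    obtain ⟨hvU, hbv⟩ := mem_filter.1 hv
    exact ⟨v, hvU, (h.mem_or_mem_of_adj hb (mem_union_left _ hvU) hbv).resolve_left hvS⟩

end IsSeparation

theorem exists_isSeparation_of_not_kConnected [DecidableEq V] {G : SimpleGraph V} {n : ℕ}
    {s : Finset V} (hs : n < #s) (hG : ¬ KConnected (G.induce (s : Set V)) n) :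
    ∃ S A B, IsSeparation G s S A B ∧ #S < n := by
  classical
  have hcard : n < Nat.card (s : Set V) := by simpa using hs
  simp only [KConnected, hcard, true_and, not_forall, not_not] at hG
  obtain ⟨X, hX, A, B, hA, hB, hAB, hABX, hadj⟩ := hG
  let toV : Set (s : Set V) → Finset V := fun P => P.toFinset.map (Function.Embedding.subtype _)
  have disjoint_toV : ∀ {P Q : Set (s : Set V)}, Disjoint P Q → Disjoint (toV P) (toV Q) :=
    fun h => (disjoint_map _).2 (Set.disjoint_toFinset.2 h)
  have hXAB : Disjoint X (A ∪ B) := hABX ▸ disjoint_compl_right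
  refine ⟨toV X, toV A, toV B, ⟨?_, disjoint_toV (hXAB.mono_right Set.subset_union_left),
    disjoint_toV (hXAB.mono_right Set.subset_union_right), disjoint_toV hAB,
    by simpa [toV] using hA, by simpa [toV] using hB, ?_⟩, ?_⟩
  · have hcover : X ∪ (A ∪ B) = Set.univ := by rw [hABX, Set.union_compl_self]
    rw [← map_union, ← map_union, ← Set.toFinset_union, ← Set.toFinset_union]
    simp only [hcover, Set.toFinset_univ]
    ext v
    simp
  · simpa [toV] using fun a ha haA b hb hbB => hadj ⟨a, ha⟩ haA ⟨b, hb⟩ hbB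
  · rwa [card_map, ← Set.ncard_eq_toFinset_card']

end Separation

section Extension

open Finset

variable {γ : Type*} {G : SimpleGraph V} {U X : Finset V} {F : V → Finset γ} {φ : V → γ}

/-- The weight of an extension problem: one for each colour forbidden at a vertex of `U`, and `k`
for each precoloured vertex. -/
def weight (k : ℕ) (U X : Finset V) (F : V → Finset γ) : ℕ :=
  ∑ v ∈ U, #(F v) + k * #X

theorem weight_mono {k : ℕ} {U' X' : Finset V} (hU : U' ⊆ U) (hX : X' ⊆ X) :
    weight k U' X' F ≤ weight k U X F :=
  Nat.add_le_add (sum_le_sum_of_subset hU) (Nat.mul_le_mul_left k (card_le_card hX))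

/-- The extension problems solved by induction: no vertex forbids more than `k` colours, and the
weight is less than that of `2 * k` precoloured vertices. -/
structure IsLight (k : ℕ) (U X : Finset V) (F : V → Finset γ) : Prop where
  disjoint : Disjoint U X
  card_forbidden_le : ∀ v ∈ U, #(F v) ≤ k
  weight_lt : weight k U X F < 2 * k * k

namespace IsLight

variable {k : ℕ}

theorem mono {U' X' : Finset V} (h : IsLight k U X F) (hU : U' ⊆ U) (hX : X' ⊆ X) :
    IsLight k U' X' F where
  disjoint := h.disjoint.mono hU hX
  card_forbidden_le v hv := h.card_forbidden_le v (hU hv)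
  weight_lt := (weight_mono hU hX).trans_lt h.weight_lt

theorem card_lt (h : IsLight k U X F) : #X < 2 * k := by
  have : k * #X < 2 * k * k := (Nat.le_add_left _ _).trans_lt h.weight_lt
  exact Nat.lt_of_mul_lt_mul_left (a := k) (by linarith)

end IsLight

variable [DecidableEq V]

/-- `g` extends the precolouring `φ` of `X` to the vertices of `U`, avoiding the forbidden colours
`F v` at each `v ∈ U`. Edges inside `X` are not required to be properly coloured. -/
structure IsExtension (G : SimpleGraph V) (U X : Finset V) (F : V → Finset γ) (φ g : V → γ) :
    Prop where
  eq_precoloring : ∀ v ∈ X, g v = φ v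
  notMem_forbidden : ∀ v ∈ U, g v ∉ F v
  ne_of_adj : ∀ u ∈ U, ∀ v ∈ U ∪ X, G.Adj u v → g u ≠ g v

/-- The precolouring `φ` of `X` extends to `U` within the forbidden-colour constraints `F`. -/
def Extendable (G : SimpleGraph V) (U X : Finset V) (F : V → Finset γ) (φ : V → γ) : Prop :=
  ∃ g, IsExtension G U X F φ g

namespace Extendable

theorem of_insert {v : V} {β : γ} (hvU : v ∈ U) (hvX : v ∉ X) (hβF : β ∉ F v)
    (hβX : ∀ x ∈ X, φ x ≠ β)
    (h : Extendable G (U.erase v) (insert v X) F (Function.update φ v β)) :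
    Extendable G U X F φ := by
  obtain ⟨g, hg⟩ := h
  have hgv : g v = β := by simpa using hg.eq_precoloring v (mem_insert_self _ _)
  have hgX : ∀ u ∈ X, g u = φ u := fun u hu => by
    simpa [ne_of_mem_of_not_mem hu hvX] using hg.eq_precoloring u (mem_insert_of_mem hu)
  refine ⟨g, hgX, fun u hu => ?_, fun u hu w hw huw => ?_⟩
  · rcases eq_or_ne u v with rfl | huv
    · rwa [hgv]
    · exact hg.notMem_forbidden u (mem_erase.2 ⟨huv, hu⟩)
  · have hunion : U.erase v ∪ insert v X = U ∪ X := by grind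
    rcases eq_or_ne u v with rfl | huv
    · rcases mem_union.1 hw with hwU | hwX
      · exact (hg.ne_of_adj w (mem_erase.2 ⟨huw.ne', hwU⟩) u (hunion ▸ mem_union_left _ hu)
          huw.symm).symm
      · rw [hgv, hgX w hwX]
        exact (hβX w hwX).symm
    · exact hg.ne_of_adj u (mem_erase.2 ⟨huv, hu⟩) w (hunion ▸ hw) huw

theorem of_erase_precolored [DecidableEq γ] [DecidableRel G.Adj] {x : V} (hxU : x ∉ U)
    (h : Extendable G U (X.erase x) (fun v => if G.Adj x v then insert (φ x) (F v) else F v) φ) :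
    Extendable G U X F φ := by
  obtain ⟨g, hg⟩ := h
  have hU : ∀ u ∈ U, Function.update g x (φ x) u = g u := fun u hu =>
    Function.update_of_ne (ne_of_mem_of_not_mem hu hxU) _ _
  refine ⟨Function.update g x (φ x), fun v hv => ?_, fun v hv => ?_, fun u hu w hw huw => ?_⟩
  · rcases eq_or_ne v x with rfl | hvx
    · rw [Function.update_self]
    · rw [Function.update_of_ne hvx]
      exact hg.eq_precoloring v (mem_erase.2 ⟨hvx, hv⟩)
  · have := hg.notMem_forbidden v hv
    rw [hU v hv]
    split_ifs at this
    · exact fun h => this (mem_insert_of_mem h)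
    · exact this
  · rw [hU u hu]
    rcases eq_or_ne w x with rfl | hwx
    · have := hg.notMem_forbidden u hu
      rw [if_pos huw.symm] at this
      rw [Function.update_self]
      exact fun h => this (h ▸ mem_insert_self _ _)
    · rw [Function.update_of_ne hwx]
      exact hg.ne_of_adj u hu w (by grind) huw

theorem of_erase [Fintype γ] [DecidableRel G.Adj] {v : V} (hvX : v ∉ X)
    (hv : #(F v) + #{w ∈ U ∪ X | G.Adj v w} < Fintype.card γ)
    (h : Extendable G (U.erase v) X F φ) : Extendable G U X F φ := by
  classical
  obtain ⟨g, hg⟩ := h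
  obtain ⟨β, -, hβ⟩ := exists_mem_notMem_of_card_lt_card (t := univ)
    (((card_union_le (F v) ({w ∈ U ∪ X | G.Adj v w}.image g)).trans
      (Nat.add_le_add_left card_image_le _)).trans_lt hv)
  obtain ⟨hβF, hβN⟩ : β ∉ F v ∧ ∀ w ∈ U ∪ X, G.Adj v w → g w ≠ β := by simpa using hβ
  refine ⟨Function.update g v β, fun u hu => ?_, fun u hu => ?_, fun u hu w hw huw => ?_⟩
  · rw [Function.update_of_ne (ne_of_mem_of_not_mem hu hvX)]
    exact hg.eq_precoloring u hu
  · rcases eq_or_ne u v with rfl | huv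
    · rwa [Function.update_self]
    · rw [Function.update_of_ne huv]
      exact hg.notMem_forbidden u (mem_erase.2 ⟨huv, hu⟩)
  · rcases eq_or_ne u v with rfl | huv
    · rw [Function.update_self, Function.update_of_ne huw.ne']
      exact (hβN w hw huw).symm
    · rw [Function.update_of_ne huv]
      rcases eq_or_ne w v with rfl | hwv
      · rw [Function.update_self]
        exact hβN u (mem_union_left _ hu) huw.symm
      · rw [Function.update_of_ne hwv]
        exact hg.ne_of_adj u (mem_erase.2 ⟨huv, hu⟩) w (by grind) huw

theorem of_isSeparation {S A B : Finset V} (hUX : Disjoint U X)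
    (hsep : IsSeparation G (U ∪ X) S A B) (hout : Extendable G (U \ B) X F φ)
    (hin : ∀ ψ, Extendable G (U ∩ B) (X ∩ B ∪ S) F ψ) : Extendable G U X F φ := by
  obtain ⟨g, hg⟩ := hout
  obtain ⟨g', hg'⟩ := hin g
  have piecewise_eq : ∀ v ∈ U ∪ X, v ∈ S ∨ v ∈ B → (U ∩ B).piecewise g' g v = g' v := by
    intro v hv hSB
    by_cases hvUB : v ∈ U ∩ B
    · exact piecewise_eq_of_mem _ _ _ hvUB
    · rw [piecewise_eq_of_notMem _ _ _ hvUB, hg'.eq_precoloring v (by grind)]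
  have hcross : ∀ u ∈ U ∩ B, ∀ w ∈ U ∪ X, G.Adj u w →
      (U ∩ B).piecewise g' g u ≠ (U ∩ B).piecewise g' g w := by
    intro u hu w hw huw
    have hwSB := hsep.mem_or_mem_of_adj (mem_inter.1 hu).2 hw huw
    rw [piecewise_eq_of_mem _ _ _ hu, piecewise_eq w hw hwSB]
    exact hg'.ne_of_adj u hu w (by grind) huw
  refine ⟨(U ∩ B).piecewise g' g, fun v hv => ?_, fun v hv => ?_, fun u hu w hw huw => ?_⟩
  · rw [piecewise_eq_of_notMem _ _ _ fun h => disjoint_right.1 hUX hv (mem_inter.1 h).1]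
    exact hg.eq_precoloring v hv
  · by_cases hvB : v ∈ U ∩ B
    · rw [piecewise_eq_of_mem _ _ _ hvB]
      exact hg'.notMem_forbidden v hvB
    · rw [piecewise_eq_of_notMem _ _ _ hvB]
      exact hg.notMem_forbidden v (by grind)
  · by_cases huB : u ∈ U ∩ B
    · exact hcross u huB w hw huw
    by_cases hwB : w ∈ U ∩ B
    · exact (hcross w hwB u (mem_union_left _ hu) huw.symm).symm
    · rw [piecewise_eq_of_notMem _ _ _ huB, piecewise_eq_of_notMem _ _ _ hwB]
      exact hg.ne_of_adj u (by grind) w (by grind) huw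

theorem of_colorable [Fintype γ] {p e : ℕ} (hUX : Disjoint U X)
    (hU : (G.induce (U : Set V)).Colorable p) (hγ : p + e + #X ≤ Fintype.card γ)
    (hF : ∀ v ∈ U, #(F v) ≤ p) (hsum : ∑ v ∈ U, #(F v) < (e + 1) * p) :
    Extendable G U X F φ := by
  classical
  obtain ⟨C⟩ := hU
  have : NeZero p := ⟨(Nat.pos_of_mul_pos_left (Nat.zero_lt_of_lt hsum)).ne'⟩
  let cls : V → Fin p := Function.extend Subtype.val C 0
  have hcls : ∀ u (hu : u ∈ U), cls u = C ⟨u, hu⟩ := fun u hu =>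
    Subtype.val_injective.extend_apply C 0 ⟨u, hu⟩
  have hQ : p + e ≤ #(univ \ X.image φ) := by
    have h1 := le_card_sdiff (X.image φ) univ
    have h2 : #(X.image φ) ≤ #X := card_image_le
    rw [card_univ] at h1
    omega
  obtain ⟨g, hg⟩ := IsWithinBudget.exists_isListRefinement (F := F) (cls := cls)
    ⟨card_finset_fin_le _, hQ, hF, hsum⟩
  have hUnX : ∀ u ∈ U, u ∉ X := fun _ hu => disjoint_left.1 hUX hu
  refine ⟨X.piecewise φ g, fun v hv => piecewise_eq_of_mem _ _ _ hv, fun v hv => ?_,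
    fun u hu w hw huw => ?_⟩
  · rw [piecewise_eq_of_notMem _ _ _ (hUnX v hv)]
    exact hg.notMem_forbidden v hv
  · rw [piecewise_eq_of_notMem _ _ _ (hUnX u hu)]
    by_cases hwX : w ∈ X
    · rw [piecewise_eq_of_mem _ _ _ hwX]
      intro h
      exact (mem_sdiff.1 (hg.mem_palette u hu)).2 (h ▸ mem_image_of_mem φ hwX)
    · have hwU := (mem_union.1 hw).resolve_right hwX
      rw [piecewise_eq_of_notMem _ _ _ hwX]
      intro h
      have hCuw := hg.cls_eq u hu w hwU h
      rw [hcls u hu, hcls w hwU] at hCuw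
      exact C.valid (v := ⟨u, hu⟩) (w := ⟨w, hwU⟩) huw hCuw

end Extendable

theorem weight_inter_add_weight_inter_le {k : ℕ} {A B : Finset V} (hAB : Disjoint A B) :
    weight k (U ∩ A) (X ∩ A) F + weight k (U ∩ B) (X ∩ B) F ≤ weight k U X F := by
  have hdisj : ∀ Y : Finset V, Disjoint (Y ∩ A) (Y ∩ B) := fun _ =>
    hAB.mono inter_subset_right inter_subset_right
  calc weight k (U ∩ A) (X ∩ A) F + weight k (U ∩ B) (X ∩ B) F
      = weight k (U ∩ A ∪ U ∩ B) (X ∩ A ∪ X ∩ B) F := by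
        rw [weight, weight, weight, sum_union (hdisj U), card_union_of_disjoint (hdisj X)]
        ring
    _ ≤ weight k U X F :=
        weight_mono (union_subset inter_subset_left inter_subset_left)
          (union_subset inter_subset_left inter_subset_left)

namespace IsLight

variable {k p : ℕ}

theorem insert (h : IsLight k U X F) {v : V} (hv : v ∈ U) (hvk : #(F v) = k) :
    IsLight k (U.erase v) (insert v X) F where
  disjoint := by
    rw [disjoint_insert_right]
    exact ⟨notMem_erase v U, h.disjoint.mono_left (erase_subset v U)⟩
  card_forbidden_le u hu := h.card_forbidden_le u (mem_of_mem_erase hu)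
  weight_lt := by
    have hU := add_sum_erase U (fun u => #(F u)) hv
    have hw := h.weight_lt
    rw [weight] at hw ⊢
    rw [card_insert_of_notMem (disjoint_left.1 h.disjoint hv)]
    linarith

theorem erase_precolored [DecidableEq γ] [DecidableRel G.Adj] (h : IsLight k U X F) {x : V}
    (hx : x ∈ X) (hxk : #{v ∈ U | G.Adj x v} ≤ k) (hF : ∀ v ∈ U, #(F v) < k) (β : γ) :
    IsLight k U (X.erase x) (fun v => if G.Adj x v then Insert.insert β (F v) else F v) := by
  have hstep : ∀ v, #(if G.Adj x v then Insert.insert β (F v) else F v) ≤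
      #(F v) + if G.Adj x v then 1 else 0 := fun v => by
    split_ifs
    · exact card_insert_le _ _
    · rfl
  refine ⟨h.disjoint.mono_right (erase_subset x X), fun v hv => (hstep v).trans ?_, ?_⟩
  · have := hF v hv
    split_ifs <;> omega
  · have hsum := sum_le_sum fun v (_ : v ∈ U) => hstep v
    rw [sum_add_distrib, ← card_filter] at hsum
    have hw := h.weight_lt
    rw [weight, ← card_erase_add_one hx] at hw
    rw [weight]
    linarith

theorem inter_union (h : IsLight k U X F) {S A B : Finset V}
    (hsep : IsSeparation G (U ∪ X) S A B) (hS : #S ≤ k)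
    (hB : weight k (U ∩ B) (X ∩ B) F < k * k) : IsLight k (U ∩ B) (X ∩ B ∪ S) F where
  disjoint := disjoint_union_right.2 ⟨h.disjoint.mono inter_subset_left inter_subset_left,
    hsep.disjoint_right.symm.mono_left inter_subset_right⟩
  card_forbidden_le v hv := h.card_forbidden_le v (mem_inter.1 hv).1
  weight_lt := by
    have hcard := Nat.mul_le_mul_left k
      ((card_union_le (X ∩ B) S).trans (Nat.add_le_add_left hS _))
    rw [weight] at hB ⊢
    linarith

theorem extendable_of_colorable [Fintype γ] (h : IsLight k U X F) (hkp : k ≤ p)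
    (hγ : p + 2 * k ≤ Fintype.card γ + 1) (hU : (G.induce (U : Set V)).Colorable p) :
    Extendable G U X F φ := by
  obtain ⟨e, he⟩ := Nat.exists_eq_add_of_lt h.card_lt
  have hw := h.weight_lt
  refine .of_colorable h.disjoint hU (e := e) (by omega)
    (fun v hv => (h.card_forbidden_le v hv).trans hkp) ?_
  calc ∑ v ∈ U, #(F v) < (e + 1) * k := by
        rw [weight, he] at hw
        linarith
    _ ≤ (e + 1) * p := Nat.mul_le_mul_left _ hkp

theorem extendable_of_forall_erase [Fintype γ] (h : IsLight k U X F) (hkp : k ≤ p)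
    (hγ : p + 2 * k ≤ Fintype.card γ + 1) {v : V} (hv : v ∈ U) (hvk : #(F v) = k)
    (ih : ∀ ψ, Extendable G (U.erase v) (Insert.insert v X) F ψ) : Extendable G U X F φ := by
  classical
  have hvX := disjoint_left.1 h.disjoint hv
  have hX := (h.insert hv hvk).card_lt
  rw [card_insert_of_notMem hvX] at hX
  obtain ⟨β, -, hβ⟩ := exists_mem_notMem_of_card_lt_card (s := F v ∪ X.image φ) (t := univ) (by
    have h1 := card_union_le (F v) (X.image φ)
    have h2 : #(X.image φ) ≤ #X := card_image_le
    rw [card_univ]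
    omega)
  obtain ⟨hβF, hβX⟩ : β ∉ F v ∧ ∀ x ∈ X, φ x ≠ β := by simpa using hβ
  exact .of_insert hv hvX hβF hβX (ih _)

theorem extendable_of_isSeparation [DecidableRel G.Adj] (h : IsLight k U X F)
    {S A B : Finset V} (hsep : IsSeparation G (U ∪ X) S A B) (hS : #S ≤ k)
    (hX : ∀ x ∈ X, k < #{v ∈ U | G.Adj x v})
    (ih : ∀ U' ⊂ U, ∀ X' ψ, IsLight k U' X' F → Extendable G U' X' F ψ) :
    Extendable G U X F φ := by
  wlog hlight : weight k (U ∩ B) (X ∩ B) F < k * k generalizing A B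
  · have hle := weight_inter_add_weight_inter_le (k := k) (U := U) (X := X) (F := F)
      hsep.disjoint_sides
    have hw := h.weight_lt
    exact this hsep.symm (by linarith)
  have hXS : ∀ x ∈ X, #S < #{v ∈ U | G.Adj x v} := fun x hx => hS.trans_lt (hX x hx)
  obtain ⟨a, haU, haA⟩ := hsep.symm.exists_mem_right_of_card_lt hXS
  obtain ⟨b, hbU, hbB⟩ := hsep.exists_mem_right_of_card_lt hXS
  have haB : a ∉ B := disjoint_left.1 hsep.disjoint_sides haA
  have hout : U \ B ⊂ U := (ssubset_iff_of_subset sdiff_subset).2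
    ⟨b, hbU, fun hb => (mem_sdiff.1 hb).2 hbB⟩
  have hin : U ∩ B ⊂ U := (ssubset_iff_of_subset inter_subset_left).2
    ⟨a, haU, fun ha => haB (mem_inter.1 ha).2⟩
  exact .of_isSeparation h.disjoint hsep (ih _ hout _ _ (h.mono sdiff_subset subset_rfl))
    fun ψ => ih _ hin _ ψ (h.inter_union hsep hS hlight)

theorem extendable [Fintype γ] (h : IsLight k U X F) (hkp : k ≤ p)
    (hγ : p + 2 * k ≤ Fintype.card γ + 1)
    (hG : ∀ s : Finset V, p + k < #s → KConnected (G.induce (s : Set V)) (k + 1) →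
      (G.induce (s : Set V)).Colorable p) :
    Extendable G U X F φ := by
  classical
  induction U using Finset.strongInduction generalizing X F φ with
  | H U ihU =>
  induction X using Finset.strongInduction generalizing F φ with
  | H X ihX =>
  by_contra hφ
  have card_forbidden_lt : ∀ v ∈ U, #(F v) < k := fun v hv =>
    (h.card_forbidden_le v hv).lt_of_ne fun hvk => hφ <| h.extendable_of_forall_erase hkp hγ hv hvk
      fun _ => ihU _ (erase_ssubset hv) (h.insert hv hvk)
  have lt_degree : ∀ x ∈ X, k < #{v ∈ U | G.Adj x v} := fun x hx => by
    by_contra! hxk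
    exact hφ <| .of_erase_precolored (disjoint_right.1 h.disjoint hx) <|
      ihX _ (erase_ssubset hx) (h.erase_precolored hx hxk card_forbidden_lt (φ x))
  have le_degree : ∀ v ∈ U, Fintype.card γ ≤ #(F v) + #{w ∈ U ∪ X | G.Adj v w} := fun v hv => by
    by_contra! hlt
    exact hφ <| .of_erase (disjoint_left.1 h.disjoint hv) hlt <|
      ihU _ (erase_ssubset hv) (h.mono (erase_subset v U) subset_rfl)
  have hU : U.Nonempty := by
    by_contra! rfl
    exact hφ ⟨φ, by simp, by simp, by simp⟩
  have hsize : p + k < #(U ∪ X) := by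
    obtain ⟨v, hv⟩ := hU
    have hdeg : #{w ∈ U ∪ X | G.Adj v w} < #(U ∪ X) :=
      card_lt_card (filter_ssubset.2 ⟨v, mem_union_left _ hv, G.irrefl⟩)
    have := card_forbidden_lt v hv
    have := le_degree v hv
    omega
  have hconn : ¬ KConnected (G.induce ((U ∪ X : Finset V) : Set V)) (k + 1) := fun hconn =>
    hφ <| h.extendable_of_colorable hkp hγ <|
      (hG _ hsize hconn).of_hom (G.induceHomOfLE (coe_subset.2 subset_union_left)).toHom
  have hk : 0 < k := by
    have := h.card_lt
    omega
  obtain ⟨S, A, B, hsep, hS⟩ := exists_isSeparation_of_not_kConnected (by omega) hconn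
  exact hφ <| h.extendable_of_isSeparation hsep (Nat.le_of_lt_succ hS) lt_degree
    fun U' hU' _ _ h' => ihU U' hU' h'

end IsLight

end Extension

theorem colorable_of_forall_finset_induce {G : SimpleGraph V} {n : ℕ}
    (h : ∀ s : Finset V, (G.induce (s : Set V)).Colorable n) : G.Colorable n := by
  refine SimpleGraph.nonempty_hom_of_forall_finite_subgraph_hom fun H hH => ?_
  have := h hH.toFinset
  rw [hH.coe_toFinset] at this
  exact this.some.comp ⟨id, H.adj_sub⟩

theorem colorable_of_forall_kConnected_colorable {G : SimpleGraph V} {k p n : ℕ} (hk : 1 ≤ k)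
    (hkp : k ≤ p) (hn : p + 2 * k ≤ n + 1)
    (hG : ∀ s : Finset V, p + k < s.card → KConnected (G.induce (s : Set V)) (k + 1) →
      (G.induce (s : Set V)).Colorable p) :
    G.Colorable n := by
  classical
  refine colorable_of_forall_finset_induce fun s => ?_
  have hlight : IsLight k s ∅ fun _ => (∅ : Finset (Fin n)) :=
    ⟨Finset.disjoint_empty_right s, by simp, by simp [weight]; omega⟩
  obtain ⟨g, hg⟩ := hlight.extendable (φ := fun _ => ⟨0, by omega⟩) hkp (by simpa using hn) hG
  exact ⟨.mk (fun v => g v) fun {u v} huv => hg.ne_of_adj u u.2 v (by simp) huv⟩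

theorem conn_subgraph_4k_general (k : ℕ) (hk : 1 ≤ k) (G : SimpleGraph V) (n : ℕ)
    (hn : (n : ℕ∞) ≤ G.chromaticNumber) (h3 : 3 * k ≤ n) :
    ∃ s : Finset V, KConnected (G.induce (s : Set V)) (k + 1) ∧ n - k < s.card ∧
      ((n + 1 - 2 * k : ℕ) : ℕ∞) ≤ (G.induce (s : Set V)).chromaticNumber := by
  by_contra! hno
  have hcol : G.Colorable (n - 1) := by
    refine colorable_of_forall_kConnected_colorable (p := n - 2 * k) hk (by omega) (by omega)
      fun s hs hconn => ?_
    have hlt := hno s hconn (by omega)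
    rw [show n + 1 - 2 * k = n - 2 * k + 1 by omega, Nat.cast_add_one,
      ENat.lt_natCast_add_one_iff] at hlt
    exact SimpleGraph.chromaticNumber_le_iff_colorable.1 hlt
  have : n ≤ n - 1 := by exact_mod_cast hn.trans hcol.chromaticNumber_le
  omega

/-- For every `k ≥ 1`, every graph `G` with `χ(G) ≥ 4k − 1` contains a `(k+1)`-connected
subgraph with more than `χ(G) − k` vertices and chromatic number at least
`χ(G) − 2k + 1`. -/
theorem conn_subgraph_4k [Fintype V] (k : ℕ) (hk : 1 ≤ k) (G : SimpleGraph V)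
    (n : ℕ) (hn : G.chromaticNumber = n) (h4 : 4 * k - 1 ≤ n) :
    ∃ H : G.Subgraph, KConnected H.coe (k + 1) ∧ n - k < Nat.card H.verts ∧
      ((n + 1 - 2 * k : ℕ) : ℕ∞) ≤ H.coe.chromaticNumber := by
  obtain ⟨s, hconn, hcard, hχ⟩ := conn_subgraph_4k_general k hk G n hn.ge (by omega)
  exact ⟨(⊤ : G.Subgraph).induce s, by rwa [← G.induce_eq_coe_induce_top], by simpa using hcard,
    by rwa [← G.induce_eq_coe_induce_top]⟩
end
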